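/- arXiv:2303.10229 — 4 statements merged into one kernel-verified Lean document; each statement's English description precedes it below -/
import Mathlib

section
/- Let ρ : ℝ² → ℝ be smooth on (0,1)² and of a special form there. Assume that for every nonempty open set U ⊆ (0,1)², neither the partial derivative ρ_s = ∂ρ/∂s nor ρ_t = ∂ρ/∂t vanishes identically on U. Then there exists a nonempty open set U ⊆ (0,1)² on which ρ_s and ρ_t are nowhere zero and on which the mixed second partial derivative ∂²/∂s∂t of the function (s,t) ↦ ln|ρ_s(s,t)/ρ_t(s,t)| vanishes identically. -/
/-!
On the box `I₁ × I₂` the chain rule gives `ρ_s = φ₃'(φ₁ s + φ₂ t) φ₁'(s)` and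
`ρ_t = φ₃'(φ₁ s + φ₂ t) φ₂'(t)` (`partial_derivs_of_special`). Both are continuous there, so the
locus where both are nonzero is open; it is nonempty by applying the nonvanishing hypothesis
first to the box and then to the open part of it where `ρ_s ≠ 0`. On that locus the factor `φ₃'`
cancels, so `ln |ρ_s / ρ_t| = ln |φ₁'(s)| - ln |φ₂'(t)|`, a sum of a function of `s` and a
function of `t`, whose mixed derivative vanishes (`mixed_deriv_eq_zero_of_split`).
-/

/-- A function `ρ` defined on `(0,1)²` is of a *special form* if there exist nonempty open
intervals `I₁, I₂ ⊆ (0,1)` and an open interval `I₃ ⊆ ℝ`, and smooth functions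
`φ₁ : I₁ → ℝ`, `φ₂ : I₂ → ℝ`, `φ₃ : I₃ → ℝ`, such that for all `s ∈ I₁` and `t ∈ I₂`
one has `φ₁ s + φ₂ t ∈ I₃` and `ρ (s, t) = φ₃ (φ₁ s + φ₂ t)`. -/
def SpecialForm (ρ : ℝ × ℝ → ℝ) : Prop :=
  ∃ a₁ b₁ a₂ b₂ a₃ b₃ : ℝ, ∃ φ₁ φ₂ φ₃ : ℝ → ℝ,
    a₁ < b₁ ∧ a₂ < b₂ ∧ a₃ < b₃ ∧
    Set.Ioo a₁ b₁ ⊆ Set.Ioo (0 : ℝ) 1 ∧ Set.Ioo a₂ b₂ ⊆ Set.Ioo (0 : ℝ) 1 ∧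
    ContDiffOn ℝ (⊤ : ℕ∞) φ₁ (Set.Ioo a₁ b₁) ∧ ContDiffOn ℝ (⊤ : ℕ∞) φ₂ (Set.Ioo a₂ b₂) ∧
    ContDiffOn ℝ (⊤ : ℕ∞) φ₃ (Set.Ioo a₃ b₃) ∧
    ∀ s ∈ Set.Ioo a₁ b₁, ∀ t ∈ Set.Ioo a₂ b₂,
      φ₁ s + φ₂ t ∈ Set.Ioo a₃ b₃ ∧ ρ (s, t) = φ₃ (φ₁ s + φ₂ t)

open Set Filter Topology in
theorem partial_derivs_of_special {ρ : ℝ × ℝ → ℝ} {S T K : Set ℝ} {φ₁ φ₂ φ₃ : ℝ → ℝ}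
    (hS : IsOpen S) (hT : IsOpen T) (hK : IsOpen K)
    (h₁ : DifferentiableOn ℝ φ₁ S) (h₂ : DifferentiableOn ℝ φ₂ T) (h₃ : DifferentiableOn ℝ φ₃ K)
    (h : ∀ s ∈ S, ∀ t ∈ T, φ₁ s + φ₂ t ∈ K ∧ ρ (s, t) = φ₃ (φ₁ s + φ₂ t))
    {s t : ℝ} (hs : s ∈ S) (ht : t ∈ T) :
    deriv (fun s' => ρ (s', t)) s = deriv φ₃ (φ₁ s + φ₂ t) * deriv φ₁ s ∧
      deriv (fun t' => ρ (s, t')) t = deriv φ₃ (φ₁ s + φ₂ t) * deriv φ₂ t := by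
  have d₁ := (h₁.differentiableAt (hS.mem_nhds hs)).hasDerivAt
  have d₂ := (h₂.differentiableAt (hT.mem_nhds ht)).hasDerivAt
  have d₃ := (h₃.differentiableAt (hK.mem_nhds (h s hs t ht).1)).hasDerivAt
  constructor
  · have e : (fun s' => ρ (s', t)) =ᶠ[𝓝 s] fun s' => φ₃ (φ₁ s' + φ₂ t) := by
      filter_upwards [hS.mem_nhds hs] with s' hs'
      exact (h s' hs' t ht).2
    rw [e.deriv_eq]
    exact (HasDerivAt.comp (h₂ := φ₃) (h := fun s' => φ₁ s' + φ₂ t) s d₃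
      (d₁.add_const (φ₂ t))).deriv
  · have e : (fun t' => ρ (s, t')) =ᶠ[𝓝 t] fun t' => φ₃ (φ₁ s + φ₂ t') := by
      filter_upwards [hT.mem_nhds ht] with t' ht'
      exact (h s hs t' ht').2
    rw [e.deriv_eq]
    exact (HasDerivAt.comp (h₂ := φ₃) (h := fun t' => φ₁ s + φ₂ t') t d₃
      (d₂.const_add (φ₁ s))).deriv

/-- No differentiability of `f` or `g` is needed: `g t` is a constant for the inner `deriv`, so the
inner `deriv` equals `deriv f p.1`, junk value or not, for all `t` near `p.2`. -/
theorem mixed_deriv_eq_zero_of_split {F : ℝ → ℝ → ℝ} {f g : ℝ → ℝ} {W : Set (ℝ × ℝ)}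
    (hW : IsOpen W) (hF : ∀ q ∈ W, F q.1 q.2 = f q.1 - g q.2) {p : ℝ × ℝ} (hp : p ∈ W) :
    deriv (fun t => deriv (fun s => F s t) p.1) p.2 = 0 := by
  have e : (fun t => deriv (fun s => F s t) p.1) =ᶠ[nhds p.2] fun _ => deriv f p.1 := by
    have hV : IsOpen {t : ℝ | (p.1, t) ∈ W} := hW.preimage (by fun_prop)
    filter_upwards [hV.mem_nhds (show p.2 ∈ {t : ℝ | (p.1, t) ∈ W} from hp)] with t ht
    have hH : IsOpen {s : ℝ | (s, t) ∈ W} := hW.preimage (by fun_prop)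
    have e' : (fun s => F s t) =ᶠ[nhds p.1] fun s => f s - g t := by
      filter_upwards [hH.mem_nhds (show p.1 ∈ {s : ℝ | (s, t) ∈ W} from ht)] with s hs
      exact hF (s, t) hs
    rw [e'.deriv_eq, deriv_sub_const]
  rw [e.deriv_eq, deriv_const]

theorem derivative_test (ρ : ℝ × ℝ → ℝ)
    (hsmooth : ContDiffOn ℝ (⊤ : ℕ∞) ρ (Set.Ioo (0 : ℝ) 1 ×ˢ Set.Ioo (0 : ℝ) 1))
    (hspec : SpecialForm ρ)
    (hnonzero : ∀ U ⊆ Set.Ioo (0 : ℝ) 1 ×ˢ Set.Ioo (0 : ℝ) 1, IsOpen U → U.Nonempty →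
      (¬ ∀ p ∈ U, deriv (fun s => ρ (s, p.2)) p.1 = 0) ∧
      (¬ ∀ p ∈ U, deriv (fun t => ρ (p.1, t)) p.2 = 0)) :
    ∃ U ⊆ Set.Ioo (0 : ℝ) 1 ×ˢ Set.Ioo (0 : ℝ) 1, IsOpen U ∧ U.Nonempty ∧
      (∀ p ∈ U, deriv (fun s => ρ (s, p.2)) p.1 ≠ 0 ∧
        deriv (fun t => ρ (p.1, t)) p.2 ≠ 0) ∧
      ∀ p ∈ U, deriv (fun t =>
          deriv (fun s =>
            Real.log |deriv (fun s' => ρ (s', t)) s / deriv (fun t' => ρ (s, t')) t|) p.1)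
        p.2 = 0 := by
  obtain ⟨a₁, b₁, a₂, b₂, a₃, b₃, φ₁, φ₂, φ₃, hab₁, hab₂, -, hI₁, hI₂, c₁, c₂, c₃, h⟩ := hspec
  have hpd : ∀ p ∈ Set.Ioo a₁ b₁ ×ˢ Set.Ioo a₂ b₂, _ := fun p hp =>
    partial_derivs_of_special isOpen_Ioo isOpen_Ioo isOpen_Ioo
      (c₁.differentiableOn (by simp)) (c₂.differentiableOn (by simp))
      (c₃.differentiableOn (by simp)) h (Set.mem_prod.1 hp).1 (Set.mem_prod.1 hp).2
  set B : Set (ℝ × ℝ) := Set.Ioo a₁ b₁ ×ˢ Set.Ioo a₂ b₂ with hB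
  have hBo : IsOpen B := isOpen_Ioo.prod isOpen_Ioo
  have hBsub : B ⊆ Set.Ioo (0 : ℝ) 1 ×ˢ Set.Ioo (0 : ℝ) 1 := Set.prod_mono hI₁ hI₂
  have hBne : B.Nonempty := (Set.nonempty_Ioo.2 hab₁).prod (Set.nonempty_Ioo.2 hab₂)
  have k₁ : ContinuousOn (fun p : ℝ × ℝ => deriv φ₁ p.1) B :=
    (c₁.continuousOn_deriv_of_isOpen isOpen_Ioo (by simp)).comp continuousOn_fst fun p hp => hp.1
  have k₂ : ContinuousOn (fun p : ℝ × ℝ => deriv φ₂ p.2) B :=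
    (c₂.continuousOn_deriv_of_isOpen isOpen_Ioo (by simp)).comp continuousOn_snd fun p hp => hp.2
  have k₃ : ContinuousOn (fun p : ℝ × ℝ => deriv φ₃ (φ₁ p.1 + φ₂ p.2)) B :=
    (c₃.continuousOn_deriv_of_isOpen isOpen_Ioo (by simp)).comp
      ((c₁.continuousOn.comp continuousOn_fst fun p hp => hp.1).add
        (c₂.continuousOn.comp continuousOn_snd fun p hp => hp.2)) fun p hp => (h _ hp.1 _ hp.2).1
  have ks : ContinuousOn (fun p : ℝ × ℝ => deriv (fun s => ρ (s, p.2)) p.1) B :=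
    (k₃.mul k₁).congr fun p hp => (hpd p hp).1
  have kt : ContinuousOn (fun p : ℝ × ℝ => deriv (fun t => ρ (p.1, t)) p.2) B :=
    (k₃.mul k₂).congr fun p hp => (hpd p hp).2
  set V : Set (ℝ × ℝ) := B ∩ {p | deriv (fun s => ρ (s, p.2)) p.1 ≠ 0} with hV
  have hVo : IsOpen V := ks.isOpen_inter_preimage hBo isOpen_ne
  have hVne : V.Nonempty := by
    have := (hnonzero B hBsub hBo hBne).1
    push Not at this
    obtain ⟨p, hp, hp0⟩ := this
    exact ⟨p, hp, hp0⟩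
  set W : Set (ℝ × ℝ) := V ∩ {p | deriv (fun t => ρ (p.1, t)) p.2 ≠ 0} with hW
  have hWo : IsOpen W :=
    (kt.mono Set.inter_subset_left).isOpen_inter_preimage hVo isOpen_ne
  have hWne : W.Nonempty := by
    have := (hnonzero V (Set.inter_subset_left.trans hBsub) hVo hVne).2
    push Not at this
    obtain ⟨p, hp, hp0⟩ := this
    exact ⟨p, hp, hp0⟩
  refine ⟨W, fun p hp => hBsub hp.1.1, hWo, hWne, fun p hp => ⟨hp.1.2, hp.2⟩, fun p hp => ?_⟩
  refine mixed_deriv_eq_zero_of_split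
    (F := fun s t =>
      Real.log |deriv (fun s' => ρ (s', t)) s / deriv (fun t' => ρ (s, t')) t|)
    (f := fun s => Real.log (deriv φ₁ s)) (g := fun t => Real.log (deriv φ₂ t)) hWo ?_ hp
  intro q hq
  have n₁ : deriv (fun s => ρ (s, q.2)) q.1 ≠ 0 := hq.1.2
  have n₂ : deriv (fun t => ρ (q.1, t)) q.2 ≠ 0 := hq.2
  obtain ⟨e₁, e₂⟩ := hpd q hq.1.1
  rw [e₁] at n₁
  rw [e₂] at n₂
  simp only [e₁, e₂]
  -- `Real.log` is even, so the absolute value can be dropped before splitting the quotient.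
  rw [mul_div_mul_left _ _ (left_ne_zero_of_mul n₁), Real.log_abs,
    Real.log_div (right_ne_zero_of_mul n₁) (right_ne_zero_of_mul n₂)]
end

section
/- Let γ₁, γ₂ : (0,1) → ℝ³ be smooth injective maps and let ρ(s,t) = ‖γ₁(s) − γ₂(t)‖² be their distance function. If ρ is of a special form, then for all positive integers m and n there exist finite sets P₁ ⊆ range γ₁ and P₂ ⊆ range γ₂ with |P₁| = m, |P₂| = n and D(P₁,P₂) ≤ m + n. -/
/-!
Write `ρ(s,t) = φ₃(φ₁(s) + φ₂(t))` on `I₁ × I₂`. If `φ₁` and `φ₂` are both nonconstant, then by the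
intermediate value theorem each of their images contains a nondegenerate segment, so for a small
common step `δ` there are points with `φ₁(sᵢ) = c₁ + iδ` and `φ₂(tⱼ) = c₂ + jδ`
(`exists_progression`). The distance of `γ₁(sᵢ)` and `γ₂(tⱼ)` then depends only on `i + j`, which
takes `m + n - 1` values. If `φ₁` is constant, the distance depends only on `t`, so arbitrary points
give at most `n` distances; symmetrically for `φ₂`. The counting in all three cases is
`few_distances_of_label`.
-/

/-- The number of distinct distances spanned by pairs of the two finite point sets. -/
noncomputable def distinctDists (P₁ P₂ : Finset (EuclideanSpace ℝ (Fin 3))) : ℕ :=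
  ((P₁ ×ˢ P₂).image fun pq => dist pq.1 pq.2).card

/-- A nonconstant continuous function on an interval attains the terms of every sufficiently
fine arithmetic progression of length `m` with a suitable first term `c`. -/
lemma exists_progression {a b : ℝ} {φ : ℝ → ℝ} (hφ : ContinuousOn φ (Set.Ioo a b))
    (hnc : ¬ ∀ x ∈ Set.Ioo a b, ∀ y ∈ Set.Ioo a b, φ x = φ y) (m : ℕ) :
    ∃ c ε : ℝ, 0 < ε ∧ ∀ δ : ℝ, 0 < δ → δ ≤ ε → ∀ i : ℕ, i < m →
      ∃ s ∈ Set.Ioo a b, φ s = c + i * δ := by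
  obtain ⟨x, hx, y, hy, hxy⟩ :
      ∃ x ∈ Set.Ioo a b, ∃ y ∈ Set.Ioo a b, φ x < φ y := by
    push Not at hnc
    obtain ⟨x, hx, y, hy, h⟩ := hnc
    rcases lt_or_gt_of_ne h with h | h
    exacts [⟨x, hx, y, hy, h⟩, ⟨y, hy, x, hx, h⟩]
  have hivt : Set.Icc (φ x) (φ y) ⊆ φ '' Set.Ioo a b :=
    isPreconnected_Ioo.intermediate_value hx hy hφ
  have hm : (0 : ℝ) < m + 1 := by positivity
  refine ⟨φ x, (φ y - φ x) / (m + 1), div_pos (sub_pos.2 hxy) hm, ?_⟩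
  intro δ hδ hδε i hi
  rw [le_div_iff₀ hm] at hδε
  have hi' : (i : ℝ) ≤ m := by exact_mod_cast hi.le
  obtain ⟨s, hs, hs'⟩ := hivt (show φ x + i * δ ∈ Set.Icc (φ x) (φ y) from
    ⟨by nlinarith [mul_nonneg (Nat.cast_nonneg (α := ℝ) i) hδ.le], by nlinarith⟩)
  exact ⟨s, hs, hs'⟩

/-- If the squared distances between `γ₁ (s i)` and `γ₂ (t j)` depend only on a label
`k i j < m + n`, these points span at most `m + n` distances. -/
lemma few_distances_of_label {γ₁ γ₂ : ℝ → EuclideanSpace ℝ (Fin 3)}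
    (hinj₁ : Set.InjOn γ₁ (Set.Ioo (0 : ℝ) 1)) (hinj₂ : Set.InjOn γ₂ (Set.Ioo (0 : ℝ) 1))
    {m n : ℕ} (s t : ℕ → ℝ)
    (hs : ∀ i < m, s i ∈ Set.Ioo (0 : ℝ) 1) (ht : ∀ j < n, t j ∈ Set.Ioo (0 : ℝ) 1)
    (hsi : ∀ i < m, ∀ i' < m, s i = s i' → i = i')
    (hti : ∀ j < n, ∀ j' < n, t j = t j' → j = j')
    (k : ℕ → ℕ → ℕ) (g : ℕ → ℝ)
    (hk : ∀ i < m, ∀ j < n, k i j < m + n ∧ ‖γ₁ (s i) - γ₂ (t j)‖ ^ 2 = g (k i j)) :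
    ∃ P₁ P₂ : Finset (EuclideanSpace ℝ (Fin 3)),
      ↑P₁ ⊆ γ₁ '' Set.Ioo (0 : ℝ) 1 ∧ ↑P₂ ⊆ γ₂ '' Set.Ioo (0 : ℝ) 1 ∧
      P₁.card = m ∧ P₂.card = n ∧ distinctDists P₁ P₂ ≤ m + n := by
  classical
  refine ⟨(Finset.range m).image fun i => γ₁ (s i), (Finset.range n).image fun j => γ₂ (t j),
    ?_, ?_, ?_, ?_, ?_⟩
  · intro p hp
    simp only [Finset.coe_image, Set.mem_image, Finset.coe_range, Set.mem_Iio] at hp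
    obtain ⟨i, hi, rfl⟩ := hp
    exact ⟨s i, hs i hi, rfl⟩
  · intro p hp
    simp only [Finset.coe_image, Set.mem_image, Finset.coe_range, Set.mem_Iio] at hp
    obtain ⟨j, hj, rfl⟩ := hp
    exact ⟨t j, ht j hj, rfl⟩
  · rw [Finset.card_image_of_injOn, Finset.card_range]
    intro i hi i' hi' h
    simp only [Finset.coe_range, Set.mem_Iio] at hi hi'
    exact hsi i hi i' hi' (hinj₁ (hs i hi) (hs i' hi') h)
  · rw [Finset.card_image_of_injOn, Finset.card_range]
    intro j hj j' hj' h
    simp only [Finset.coe_range, Set.mem_Iio] at hj hj'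
    exact hti j hj j' hj' (hinj₂ (ht j hj) (ht j' hj') h)
  · have hsub : (((Finset.range m).image fun i => γ₁ (s i)) ×ˢ
        ((Finset.range n).image fun j => γ₂ (t j))).image (fun pq => dist pq.1 pq.2) ⊆
        (Finset.range (m + n)).image fun l => √(g l) := by
      intro d hd
      simp only [Finset.mem_image, Finset.mem_product, Finset.mem_range] at hd ⊢
      obtain ⟨⟨p, q⟩, ⟨⟨i, hi, rfl⟩, ⟨j, hj, rfl⟩⟩, rfl⟩ := hd
      obtain ⟨h1, h2⟩ := hk i hi j hj
      exact ⟨k i j, h1, by rw [← h2, Real.sqrt_sq (norm_nonneg _), dist_eq_norm]⟩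
    have h := (Finset.card_le_card hsub).trans Finset.card_image_le
    rw [Finset.card_range] at h
    unfold distinctDists
    convert h

lemma exists_injective_seq_Ioo {a b : ℝ} (h : a < b) :
    ∃ s : ℕ → ℝ, (∀ i, s i ∈ Set.Ioo a b) ∧ Function.Injective s :=
  ⟨fun i => ((Set.Ioo_infinite h).natEmbedding _ i : ℝ), fun _ => Subtype.coe_prop _,
    Subtype.val_injective.comp (Function.Embedding.injective _)⟩

theorem special_form_implies_few_distances
    (γ₁ γ₂ : ℝ → EuclideanSpace ℝ (Fin 3))
    (hγ₁ : ContDiffOn ℝ (⊤ : ℕ∞) γ₁ (Set.Ioo (0 : ℝ) 1))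
    (hγ₂ : ContDiffOn ℝ (⊤ : ℕ∞) γ₂ (Set.Ioo (0 : ℝ) 1))
    (hinj₁ : Set.InjOn γ₁ (Set.Ioo (0 : ℝ) 1))
    (hinj₂ : Set.InjOn γ₂ (Set.Ioo (0 : ℝ) 1))
    (hspec : SpecialForm fun p => ‖γ₁ p.1 - γ₂ p.2‖ ^ 2) :
    ∀ m n : ℕ, 0 < m → 0 < n →
      ∃ P₁ P₂ : Finset (EuclideanSpace ℝ (Fin 3)),
        ↑P₁ ⊆ γ₁ '' Set.Ioo (0 : ℝ) 1 ∧ ↑P₂ ⊆ γ₂ '' Set.Ioo (0 : ℝ) 1 ∧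
        P₁.card = m ∧ P₂.card = n ∧
        distinctDists P₁ P₂ ≤ m + n := by
  intro m n hm hn
  obtain ⟨a₁, b₁, a₂, b₂, a₃, b₃, φ₁, φ₂, φ₃, h₁, h₂, -, hI₁, hI₂, hφ₁, hφ₂, -, hρ⟩ := hspec
  replace hρ := fun s hs t ht => (hρ s hs t ht).2
  obtain ⟨s, hs, hsi⟩ := exists_injective_seq_Ioo h₁
  obtain ⟨t, ht, hti⟩ := exists_injective_seq_Ioo h₂
  by_cases hc₁ : ∀ x ∈ Set.Ioo a₁ b₁, ∀ y ∈ Set.Ioo a₁ b₁, φ₁ x = φ₁ y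
  · refine few_distances_of_label hinj₁ hinj₂ s t (fun i _ => hI₁ (hs i)) (fun j _ => hI₂ (ht j))
      (fun i _ i' _ h => hsi h) (fun j _ j' _ h => hti h)
      (fun _ j => j) (fun j => φ₃ (φ₁ (s 0) + φ₂ (t j))) fun i hi j hj => ⟨by omega, ?_⟩
    rw [← hc₁ _ (hs i) _ (hs 0)]
    exact hρ _ (hs i) _ (ht j)
  by_cases hc₂ : ∀ x ∈ Set.Ioo a₂ b₂, ∀ y ∈ Set.Ioo a₂ b₂, φ₂ x = φ₂ y
  · refine few_distances_of_label hinj₁ hinj₂ s t (fun i _ => hI₁ (hs i)) (fun j _ => hI₂ (ht j))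
      (fun i _ i' _ h => hsi h) (fun j _ j' _ h => hti h)
      (fun i _ => i) (fun i => φ₃ (φ₁ (s i) + φ₂ (t 0))) fun i hi j hj => ⟨by omega, ?_⟩
    rw [← hc₂ _ (ht j) _ (ht 0)]
    exact hρ _ (hs i) _ (ht j)
  clear! s t
  obtain ⟨c₁, ε₁, hε₁, H₁⟩ := exists_progression hφ₁.continuousOn hc₁ m
  obtain ⟨c₂, ε₂, hε₂, H₂⟩ := exists_progression hφ₂.continuousOn hc₂ n
  have hδ : 0 < min ε₁ ε₂ := lt_min hε₁ hε₂
  replace H₁ := H₁ _ hδ (min_le_left _ _)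
  replace H₂ := H₂ _ hδ (min_le_right _ _)
  generalize min ε₁ ε₂ = δ at hδ H₁ H₂
  choose! s hs hφs using H₁
  choose! t ht hφt using H₂
  refine few_distances_of_label hinj₁ hinj₂ s t (fun i hi => hI₁ (hs i hi))
    (fun j hj => hI₂ (ht j hj)) ?_ ?_ (fun i j => i + j)
    (fun l => φ₃ (c₁ + c₂ + l * δ)) fun i hi j hj => ⟨by omega, ?_⟩
  · intro i hi i' hi' h
    have h' := congrArg φ₁ h
    rw [hφs i hi, hφs i' hi', add_right_inj, mul_left_inj' hδ.ne'] at h'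
    exact_mod_cast h'
  · intro j hj j' hj' h
    have h' := congrArg φ₂ h
    rw [hφt j hj, hφt j' hj', add_right_inj, mul_left_inj' hδ.ne'] at h'
    exact_mod_cast h'
  · have h := hρ _ (hs i hi) _ (ht j hj)
    rw [hφs i hi, hφt j hj] at h
    refine h.trans (congrArg φ₃ ?_)
    push_cast
    ring
end

section
/- Let μ ≠ 0 and D ≠ 0 be real numbers. Let ℓ = {(x, y, z) ∈ ℝ³ : x = μ·z ∧ y = 0} and let C = {(x, y, z) ∈ ℝ³ : x²/(μ² + 1) + y² = D ∧ z = 0}. Then every point p ∈ C satisfies (infDist p ℓ)² = D; in particular, C is contained in the cylinder of radius √D centered around the line ℓ. -/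
/-!
For `p = (x, y, 0)`, the squared distance from `p` to the point `(μ t, 0, t)` of the line is
`(x - μ t)² + y² + t² = x² / (μ² + 1) + y² + (μ² + 1) (t - μ x / (μ² + 1))²`.
It is therefore at least `x² / (μ² + 1) + y² = D`, with equality at `t = μ x / (μ² + 1)`, so the
distance from `p` to the line is `√D`.
-/

theorem ellipse_in_cylinder
    (μ D : ℝ) (hμ : μ ≠ 0) (hD : D ≠ 0)
    (ℓ C : Set (EuclideanSpace ℝ (Fin 3)))
    (hℓ : ℓ = {v | v 0 = μ * v 2 ∧ v 1 = 0})
    (hC : C = {v | (v 0) ^ 2 / (μ ^ 2 + 1) + (v 1) ^ 2 = D ∧ v 2 = 0}) :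
    (∀ p ∈ C, (Metric.infDist p ℓ) ^ 2 = D) ∧
      C ⊆ {x | Metric.infDist x ℓ = Real.sqrt D} := by
  have hpos : 0 < μ ^ 2 + 1 := by positivity
  have hdist : ∀ p ∈ C, ∀ q ∈ ℓ, dist p q =
      Real.sqrt (D + (μ ^ 2 + 1) * (q 2 - μ * p 0 / (μ ^ 2 + 1)) ^ 2) := by
    intro p hp q hq
    subst hℓ hC
    obtain ⟨h1, h2⟩ := hp
    obtain ⟨h3, h4⟩ := hq
    rw [EuclideanSpace.dist_eq, Fin.sum_univ_three]
    simp only [Real.dist_eq, sq_abs]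
    rw [h2, h3, h4, ← h1]
    congr 1
    field_simp
    ring
  have key : ∀ p ∈ C, Metric.infDist p ℓ = Real.sqrt D := by
    intro p hp
    -- the foot of the perpendicular from `p` to the line
    let f : EuclideanSpace ℝ (Fin 3) :=
      !₂[μ * (μ * p 0 / (μ ^ 2 + 1)), 0, μ * p 0 / (μ ^ 2 + 1)]
    have hf : f ∈ ℓ := by
      subst hℓ
      simp [f]
    apply le_antisymm
    · refine (Metric.infDist_le_dist_of_mem hf).trans_eq ?_
      rw [hdist p hp f hf]
      simp [f]
    · rw [Metric.le_infDist ⟨f, hf⟩]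
      intro q hq
      rw [hdist p hp q hq]
      exact Real.sqrt_le_sqrt (le_add_of_nonneg_right (by positivity))
  refine ⟨fun p hp => ?_, key⟩
  have hD0 : 0 ≤ D := by
    subst hC
    rw [← hp.1]
    positivity
  rw [key p hp, Real.sq_sqrt hD0]
end

section
/- Let I₁, I₂ ⊆ ℝ be nonempty open intervals and let f : I₁ → ℝ and g : I₂ → ℝ be smooth. Define σ(s,t) = (s − t)² + f(s)² + g(t)² for (s,t) ∈ I₁ × I₂, so that σ_s(s,t) = 2(s − t) + 2f(s)f'(s) and σ_t(s,t) = 2(t − s) + 2g(t)g'(t). Assume σ_s and σ_t are nowhere zero on I₁ × I₂ and that the mixed second partial derivative ∂²/∂s∂t of the function (s,t) ↦ ln|σ_s(s,t)/σ_t(s,t)| vanishes identically on I₁ × I₂. Then there exist A₁, A₂, A₃ ∈ ℝ such that one of the following holds: (i) A₂ ≠ 0, f(s)·f'(s) = A₁ + A₂·s − s for all s ∈ I₁, and g(t)·g'(t) = −A₁/A₂ + t/A₂ − t for all t ∈ I₂; or (ii) f(s)·f'(s) = A₁/(s + A₂) + A₃ − s for all s ∈ I₁ and g(t)·g'(t)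 = A₁/(t − A₃) − A₂ − t for all t ∈ I₂, where moreover, if A₁ ≠ 0, then s + A₂ ≠ 0 for all s ∈ I₁ and t − A₃ ≠ 0 for all t ∈ I₂. -/
/-!
Put `F s = s + f s * f' s` and `G t = t + g t * g' t`, so that `σ_s = 2 (F s - t)` and
`σ_t = 2 (G t - s)`. The vanishing of the mixed derivative of `ln |σ_s / σ_t|` becomes
`F' s * (G t - s) ^ 2 = G' t * (F s - t) ^ 2` (`derivative_identity`).

If `G'` vanishes at one point, this identity forces `F' = 0` and `G' = 0` everywhere, so `F` and `G`
are constant: this is alternative (ii) with `A₁ = 0`. Otherwise freeze `t = t₀`: the identity is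
then a separable equation for `F`, whose first integral is
`1 / (F s - t₀) + G' t₀ / (G t₀ - s) = const`, so `F` is a Möbius function of `s`
(`first_integral`). Substituting it back, for each fixed `t` the identity says that two quadratic
polynomials in `s`, each a multiple of a square, agree on an interval; comparing coefficients shows
that `G` is the inverse Möbius function (`moebius_relations`). The two alternatives correspond to
`F` being affine or having a finite pole.
-/

lemma constant_of_hasDerivAt_zero {a b : ℝ} {H : ℝ → ℝ}
    (hH : ∀ x ∈ Set.Ioo a b, HasDerivAt H 0 x) :
    ∀ x ∈ Set.Ioo a b, ∀ y ∈ Set.Ioo a b, H x = H y := by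
  intro x hx y hy
  exact isOpen_Ioo.is_const_of_deriv_eq_zero isPreconnected_Ioo
    (fun z hz => (hH z hz).differentiableAt.differentiableWithinAt)
    (fun z hz => (hH z hz).deriv) hx hy

lemma quadratic_coeff_eq_zero {a b p q r : ℝ} (hab : a < b)
    (h : ∀ x ∈ Set.Ioo a b, p * x ^ 2 + q * x + r = 0) : p = 0 ∧ q = 0 := by
  obtain ⟨d, hd, m, hm⟩ : ∃ d > 0, ∃ m, a < m - d ∧ m + d < b :=
    ⟨(b - a) / 4, by linarith, (a + b) / 2, by linarith, by linarith⟩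
  have e₀ := h m ⟨by linarith, by linarith⟩
  have e₁ := h (m + d) ⟨by linarith, by linarith⟩
  have e₂ := h (m - d) ⟨by linarith, by linarith⟩
  have hp : p = 0 := by
    have : p * (2 * d ^ 2) = 0 := by linear_combination e₁ + e₂ - 2 * e₀
    exact (mul_eq_zero.mp this).resolve_right (by positivity)
  refine ⟨hp, ?_⟩
  subst hp
  have : q * d = 0 := by linear_combination e₁ - e₀
  exact (mul_eq_zero.mp this).resolve_right hd.ne'

/-- The vanishing mixed derivative, written out: the inner derivative is
`F' s / (F s - t) + 1 / (G t - s)`. -/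
lemma derivative_identity {a₁ b₁ a₂ b₂ : ℝ} {F G F' G' : ℝ → ℝ} {σs σt : ℝ → ℝ → ℝ}
    (hσs : ∀ s t, σs s t = 2 * (F s - t)) (hσt : ∀ s t, σt s t = 2 * (G t - s))
    (hF : ∀ s ∈ Set.Ioo a₁ b₁, HasDerivAt F (F' s) s)
    (hG : ∀ t ∈ Set.Ioo a₂ b₂, HasDerivAt G (G' t) t)
    (hF0 : ∀ s ∈ Set.Ioo a₁ b₁, ∀ t ∈ Set.Ioo a₂ b₂, F s - t ≠ 0)
    (hG0 : ∀ s ∈ Set.Ioo a₁ b₁, ∀ t ∈ Set.Ioo a₂ b₂, G t - s ≠ 0)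
    (hmixed : ∀ s ∈ Set.Ioo a₁ b₁, ∀ t ∈ Set.Ioo a₂ b₂,
      deriv (fun t' => deriv (fun s' => Real.log |σs s' t' / σt s' t'|) s) t = 0) :
    ∀ s ∈ Set.Ioo a₁ b₁, ∀ t ∈ Set.Ioo a₂ b₂,
      F' s * (G t - s) ^ 2 = G' t * (F s - t) ^ 2 := by
  have inner : ∀ s ∈ Set.Ioo a₁ b₁, ∀ t ∈ Set.Ioo a₂ b₂,
      deriv (fun s' => Real.log |σs s' t / σt s' t|) s = F' s / (F s - t) + 1 / (G t - s) := by
    intro s hs t ht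
    have hF1 := hF0 s hs t ht
    have hG1 := hG0 s hs t ht
    have e : (fun s' => Real.log |σs s' t / σt s' t|)
        = fun s' => Real.log ((F s' - t) / (G t - s')) := by
      funext s'
      rw [Real.log_abs, hσs, hσt, mul_div_mul_left _ _ two_ne_zero]
    rw [e]
    have h := (((hF s hs).sub_const t).div ((hasDerivAt_id s).const_sub (G t)) hG1).log
      (div_ne_zero hF1 hG1)
    refine h.deriv.trans ?_
    simp only [Pi.div_apply, id]
    field_simp
    ring
  intro s hs t ht
  have hF1 := hF0 s hs t ht
  have hG1 := hG0 s hs t ht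
  have hev : (fun t' => deriv (fun s' => Real.log |σs s' t' / σt s' t'|) s)
      =ᶠ[nhds t] fun t' => F' s / (F s - t') + 1 / (G t' - s) := by
    filter_upwards [isOpen_Ioo.mem_nhds ht] with t' ht' using inner s hs t' ht'
  have hd : HasDerivAt (fun t' => F' s / (F s - t') + 1 / (G t' - s))
      (F' s / (F s - t) ^ 2 - G' t / (G t - s) ^ 2) t := by
    have h := ((hasDerivAt_const t (F' s)).div ((hasDerivAt_id t).const_sub (F s)) hF1).add
      ((hasDerivAt_const t (1 : ℝ)).div ((hG t ht).sub_const s) hG1)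
    refine h.congr_deriv ?_
    simp only [id]
    ring
  have h0 := hmixed s hs t ht
  rw [hev.deriv_eq, hd.deriv] at h0
  field_simp at h0
  linear_combination h0

/-- With `t = t₀` frozen, the differential equation for `F` integrates to a Möbius relation. -/
lemma first_integral {a₁ b₁ t₀ G₀ k : ℝ} {F F' : ℝ → ℝ} (h₁ : a₁ < b₁)
    (hF : ∀ s ∈ Set.Ioo a₁ b₁, HasDerivAt F (F' s) s)
    (hF0 : ∀ s ∈ Set.Ioo a₁ b₁, F s - t₀ ≠ 0)
    (hG0 : ∀ s ∈ Set.Ioo a₁ b₁, G₀ - s ≠ 0)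
    (key : ∀ s ∈ Set.Ioo a₁ b₁, F' s * (G₀ - s) ^ 2 = k * (F s - t₀) ^ 2) :
    ∃ C : ℝ, ∀ s ∈ Set.Ioo a₁ b₁, (F s - t₀) * (k + C * (G₀ - s)) = -(G₀ - s) := by
  have hH : ∀ s ∈ Set.Ioo a₁ b₁,
      HasDerivAt (fun s => 1 / (F s - t₀) + k / (G₀ - s)) 0 s := by
    intro s hs
    have hF1 := hF0 s hs
    have hG1 := hG0 s hs
    have h := ((hasDerivAt_const s (1 : ℝ)).div ((hF s hs).sub_const t₀) hF1).add
      ((hasDerivAt_const s k).div ((hasDerivAt_id s).const_sub G₀) hG1)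
    refine h.congr_deriv ?_
    simp only [id]
    field_simp
    linear_combination -key s hs
  obtain ⟨s₀, hs₀⟩ := Set.nonempty_Ioo.mpr h₁
  refine ⟨-(1 / (F s₀ - t₀) + k / (G₀ - s₀)), fun s hs => ?_⟩
  rw [constant_of_hasDerivAt_zero hH s₀ hs₀ s hs]
  have hF1 := hF0 s hs
  have hG1 := hG0 s hs
  field_simp
  ring

/-- Comparing coefficients in `s` for each fixed `t` turns the Möbius relation for `F` into one
for `G`. -/
lemma moebius_relations {a₁ b₁ a₂ b₂ t₀ C : ℝ} {F G F' G' : ℝ → ℝ} (h₁ : a₁ < b₁)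
    (ht₀ : t₀ ∈ Set.Ioo a₂ b₂) (hk : G' t₀ ≠ 0)
    (hG0 : ∀ s ∈ Set.Ioo a₁ b₁, G t₀ - s ≠ 0)
    (key : ∀ s ∈ Set.Ioo a₁ b₁, ∀ t ∈ Set.Ioo a₂ b₂,
      F' s * (G t - s) ^ 2 = G' t * (F s - t) ^ 2)
    (hC : ∀ s ∈ Set.Ioo a₁ b₁, (F s - t₀) * (G' t₀ + C * (G t₀ - s)) = -(G t₀ - s)) :
    ∀ t ∈ Set.Ioo a₂ b₂, 1 - C * (t₀ - t) ≠ 0 ∧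
      G t * (1 - C * (t₀ - t)) = G t₀ - (t₀ - t) * (G' t₀ + C * G t₀) := by
  intro t ht
  set k := G' t₀ with hkdef
  set m := 1 - C * (t₀ - t) with hm
  set e := (t₀ - t) * (k + C * G t₀) - G t₀ with he
  have hsq : ∀ s ∈ Set.Ioo a₁ b₁, k * (G t - s) ^ 2 = G' t * (e + m * s) ^ 2 := by
    intro s hs
    have e₀ := key s hs t₀ ht₀
    have e₁ := key s hs t ht
    have hD := hC s hs
    have hG1 := hG0 s hs
    have hFt : (F s - t) * (k + C * (G t₀ - s)) = e + m * s := by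
      rw [he, hm]; linear_combination hD
    have hmain : (k * (G t - s) ^ 2) * (G t₀ - s) ^ 2
        = (G' t * (e + m * s) ^ 2) * (G t₀ - s) ^ 2 := by
      rw [← hFt]
      have hD2 : ((F s - t₀) * (k + C * (G t₀ - s))) ^ 2 = (G t₀ - s) ^ 2 := by rw [hD]; ring
      linear_combination -(k * (G t - s) ^ 2) * hD2 +
        (k + C * (G t₀ - s)) ^ 2 * (G t₀ - s) ^ 2 * e₁ -
        (k + C * (G t₀ - s)) ^ 2 * (G t - s) ^ 2 * e₀
    exact mul_right_cancel₀ (pow_ne_zero 2 hG1) hmain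
  obtain ⟨c₂, c₁⟩ := quadratic_coeff_eq_zero (p := k - G' t * m ^ 2)
    (q := -2 * k * G t - 2 * G' t * e * m) (r := k * G t ^ 2 - G' t * e ^ 2) h₁
    (fun s hs => by linear_combination hsq s hs)
  have hm0 : m ≠ 0 := by
    intro h
    rw [h] at c₂
    exact hk (by linear_combination c₂)
  refine ⟨hm0, ?_⟩
  have : k * (G t * m + e) = 0 := by
    linear_combination -m / 2 * c₁ + e * c₂
  have := (mul_eq_zero.mp this).resolve_left hk
  rw [he] at this
  linear_combination this

/-- The classification in terms of `F = s + f f'` and `G = t + g g'`. -/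
lemma classification {a₁ b₁ a₂ b₂ : ℝ} {F G F' G' : ℝ → ℝ} (h₁ : a₁ < b₁) (h₂ : a₂ < b₂)
    (hF : ∀ s ∈ Set.Ioo a₁ b₁, HasDerivAt F (F' s) s)
    (hG : ∀ t ∈ Set.Ioo a₂ b₂, HasDerivAt G (G' t) t)
    (hF0 : ∀ s ∈ Set.Ioo a₁ b₁, ∀ t ∈ Set.Ioo a₂ b₂, F s - t ≠ 0)
    (hG0 : ∀ s ∈ Set.Ioo a₁ b₁, ∀ t ∈ Set.Ioo a₂ b₂, G t - s ≠ 0)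
    (key : ∀ s ∈ Set.Ioo a₁ b₁, ∀ t ∈ Set.Ioo a₂ b₂,
      F' s * (G t - s) ^ 2 = G' t * (F s - t) ^ 2) :
    ∃ A₁ A₂ A₃ : ℝ,
      (A₂ ≠ 0 ∧
        (∀ s ∈ Set.Ioo a₁ b₁, F s = A₁ + A₂ * s) ∧
        (∀ t ∈ Set.Ioo a₂ b₂, G t = -A₁ / A₂ + t / A₂)) ∨
      ((∀ s ∈ Set.Ioo a₁ b₁, F s = A₁ / (s + A₂) + A₃) ∧
        (∀ t ∈ Set.Ioo a₂ b₂, G t = A₁ / (t - A₃) - A₂) ∧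
        (A₁ ≠ 0 →
          (∀ s ∈ Set.Ioo a₁ b₁, s + A₂ ≠ 0) ∧ (∀ t ∈ Set.Ioo a₂ b₂, t - A₃ ≠ 0))) := by
  obtain ⟨s₀, hs₀⟩ := Set.nonempty_Ioo.mpr h₁
  obtain ⟨t₀, ht₀⟩ := Set.nonempty_Ioo.mpr h₂
  by_cases hk : G' t₀ = 0
  · have hF'0 : ∀ s ∈ Set.Ioo a₁ b₁, F' s = 0 := by
      intro s hs
      have h := key s hs t₀ ht₀
      rw [hk, zero_mul] at h
      exact (mul_eq_zero.mp h).resolve_right (pow_ne_zero 2 (hG0 s hs t₀ ht₀))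
    have hG'0 : ∀ t ∈ Set.Ioo a₂ b₂, G' t = 0 := by
      intro t ht
      have h := key s₀ hs₀ t ht
      rw [hF'0 s₀ hs₀, zero_mul] at h
      exact (mul_eq_zero.mp h.symm).resolve_right (pow_ne_zero 2 (hF0 s₀ hs₀ t ht))
    refine ⟨0, -G t₀, F s₀, Or.inr ⟨fun s hs => ?_, fun t ht => ?_, fun h => absurd rfl h⟩⟩
    · rw [constant_of_hasDerivAt_zero (H := F) (fun x hx => hF'0 x hx ▸ hF x hx) s hs s₀ hs₀]
      simp
    · rw [constant_of_hasDerivAt_zero (H := G) (fun x hx => hG'0 x hx ▸ hG x hx) t ht t₀ ht₀]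
      simp
  · obtain ⟨C, hC⟩ := first_integral h₁ hF (fun s hs => hF0 s hs t₀ ht₀)
      (fun s hs => hG0 s hs t₀ ht₀) (fun s hs => key s hs t₀ ht₀)
    have hGt := moebius_relations h₁ ht₀ hk (fun s hs => hG0 s hs t₀ ht₀) key hC
    set k := G' t₀
    by_cases hC0 : C = 0
    · refine ⟨t₀ - G t₀ / k, 1 / k, 0, Or.inl ⟨one_div_ne_zero hk, fun s hs => ?_,
        fun t ht => ?_⟩⟩
      · have h := hC s hs
        rw [hC0] at h
        field_simp
        linear_combination h
      · have h := (hGt t ht).2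
        rw [hC0] at h
        field_simp
        linear_combination h
    · -- The pole of `F` is the zero of `k + C (G t₀ - s)`, and `t₀ - 1 / C` its value at infinity.
      have hden : ∀ s, s + (-G t₀ - k / C) = -(k + C * (G t₀ - s)) / C := by
        intro s; field_simp; ring
      have hden' : ∀ t, t - (t₀ - 1 / C) = (1 - C * (t₀ - t)) / C := by
        intro t; field_simp; ring
      have hD0 : ∀ s ∈ Set.Ioo a₁ b₁, k + C * (G t₀ - s) ≠ 0 := by
        intro s hs h0
        have h := hC s hs
        rw [h0, mul_zero] at h
        exact hG0 s hs t₀ ht₀ (by linear_combination h)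
      refine ⟨-k / C ^ 2, -G t₀ - k / C, t₀ - 1 / C, Or.inr ⟨fun s hs => ?_, fun t ht => ?_,
        fun _ => ⟨fun s hs => ?_, fun t ht => ?_⟩⟩⟩
      · have h := hC s hs
        have hD := hD0 s hs
        rw [hden]
        generalize hDdef : k + C * (G t₀ - s) = D at h hD
        field_simp
        linear_combination C * h - hDdef
      · obtain ⟨hm, h⟩ := hGt t ht
        rw [hden']
        generalize hmdef : 1 - C * (t₀ - t) = m at h hm
        field_simp
        linear_combination C * h + (k + C * G t₀) * hmdef
      · rw [hden]
        exact div_ne_zero (neg_ne_zero.mpr (hD0 s hs)) hC0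
      · rw [hden']
        exact div_ne_zero (hGt t ht).1 hC0

lemma hasDerivAt_id_add_mul_deriv {a b : ℝ} {f : ℝ → ℝ}
    (hf : ContDiffOn ℝ (⊤ : ℕ∞) f (Set.Ioo a b)) :
    ∀ s ∈ Set.Ioo a b, HasDerivAt (fun s => s + f s * deriv f s)
      (deriv (fun s => s + f s * deriv f s) s) s := by
  intro s hs
  have hn := isOpen_Ioo.mem_nhds hs
  have hd : ContDiffOn ℝ 1 (deriv f) (Set.Ioo a b) :=
    hf.deriv_of_isOpen isOpen_Ioo (by norm_cast)
  have h1 : DifferentiableAt ℝ f s := (hf.contDiffAt hn).differentiableAt (by simp)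
  have h2 : DifferentiableAt ℝ (deriv f) s := (hd.contDiffAt hn).differentiableAt (by simp)
  exact (differentiableAt_id.add (h1.mul h2)).hasDerivAt

theorem important_lemma
    (a₁ b₁ a₂ b₂ : ℝ) (h₁ : a₁ < b₁) (h₂ : a₂ < b₂)
    (f g : ℝ → ℝ)
    (hf : ContDiffOn ℝ (⊤ : ℕ∞) f (Set.Ioo a₁ b₁))
    (hg : ContDiffOn ℝ (⊤ : ℕ∞) g (Set.Ioo a₂ b₂))
    (σs σt : ℝ → ℝ → ℝ)
    (hσs : ∀ s t : ℝ, σs s t = 2 * (s - t) + 2 * f s * deriv f s)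
    (hσt : ∀ s t : ℝ, σt s t = 2 * (t - s) + 2 * g t * deriv g t)
    (hσs0 : ∀ s ∈ Set.Ioo a₁ b₁, ∀ t ∈ Set.Ioo a₂ b₂, σs s t ≠ 0)
    (hσt0 : ∀ s ∈ Set.Ioo a₁ b₁, ∀ t ∈ Set.Ioo a₂ b₂, σt s t ≠ 0)
    (hmixed : ∀ s ∈ Set.Ioo a₁ b₁, ∀ t ∈ Set.Ioo a₂ b₂,
      deriv (fun t' => deriv (fun s' => Real.log |σs s' t' / σt s' t'|) s) t = 0) :
    ∃ A₁ A₂ A₃ : ℝ,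
      (A₂ ≠ 0 ∧
        (∀ s ∈ Set.Ioo a₁ b₁, f s * deriv f s = A₁ + A₂ * s - s) ∧
        (∀ t ∈ Set.Ioo a₂ b₂, g t * deriv g t = -A₁ / A₂ + t / A₂ - t)) ∨
      ((∀ s ∈ Set.Ioo a₁ b₁, f s * deriv f s = A₁ / (s + A₂) + A₃ - s) ∧
        (∀ t ∈ Set.Ioo a₂ b₂, g t * deriv g t = A₁ / (t - A₃) - A₂ - t) ∧
        (A₁ ≠ 0 →
          (∀ s ∈ Set.Ioo a₁ b₁, s + A₂ ≠ 0) ∧ (∀ t ∈ Set.Ioo a₂ b₂, t - A₃ ≠ 0))) := by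
  have hσs' : ∀ s t, σs s t = 2 * ((s + f s * deriv f s) - t) := fun s t => by
    rw [hσs]; ring
  have hσt' : ∀ s t, σt s t = 2 * ((t + g t * deriv g t) - s) := fun s t => by
    rw [hσt]; ring
  have hF := hasDerivAt_id_add_mul_deriv hf
  have hG := hasDerivAt_id_add_mul_deriv hg
  have hF0 : ∀ s ∈ Set.Ioo a₁ b₁, ∀ t ∈ Set.Ioo a₂ b₂, (s + f s * deriv f s) - t ≠ 0 :=
    fun s hs t ht h => hσs0 s hs t ht (by rw [hσs', h, mul_zero])
  have hG0 : ∀ s ∈ Set.Ioo a₁ b₁, ∀ t ∈ Set.Ioo a₂ b₂, (t + g t * deriv g t) - s ≠ 0 :=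
    fun s hs t ht h => hσt0 s hs t ht (by rw [hσt', h, mul_zero])
  obtain ⟨A₁, A₂, A₃, h⟩ := classification h₁ h₂ hF hG hF0 hG0
    (derivative_identity hσs' hσt' hF hG hF0 hG0 hmixed)
  refine ⟨A₁, A₂, A₃, h.imp ?_ ?_⟩
  · rintro ⟨hA, hf', hg'⟩
    exact ⟨hA, fun s hs => by linear_combination hf' s hs,
      fun t ht => by linear_combination hg' t ht⟩
  · rintro ⟨hf', hg', hne⟩
    exact ⟨fun s hs => by linear_combination hf' s hs,
      fun t ht => by linear_combination hg' t ht, hne⟩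
end
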